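/- Chordal graphs have singularity degree at most one: if G is chordal, then for every c ∈ ℰ(G) the PSD matrix completion problem P(G,c) admits a dual certificate Ω ⪰ 0 with ⟨Ω, X⟩ = 0 for all feasible X and rank(Ω) = n − r, where r is the maximum rank among feasible solutions. -/

import Mathlib

open Matrix

/-- `X` is a feasible solution of the PSD matrix completion problem `P(G, c)`. -/
def Feasible {n : ℕ} (G : SimpleGraph (Fin n)) (c : Fin n → Fin n → ℝ)
    (X : Matrix (Fin n) (Fin n) ℝ) : Prop :=
  X.PosSemidef ∧ (∀ i, X i i = 1) ∧ ∀ i j, G.Adj i j → X i j = c i j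

/-- The maximum rank of a feasible solution of `P(G, c)`. -/
noncomputable def maxRank {n : ℕ} (G : SimpleGraph (Fin n)) (c : Fin n → Fin n → ℝ) : ℕ :=
  sSup {r | ∃ X, Feasible G c X ∧ X.rank = r}

/-- `Ω` is a facial reduction sequence for `P(G, c)`: symmetric stress matrices supported
on the diagonal and the edges of `G`, nested PSD, orthogonal (in the trace inner product)
to every feasible solution, and whose final zero set spans a subspace of dimension equal to
the maximum rank of a feasible solution (so the sequence has rank `n - maxRank G c`). -/
def IsFacialSeq {n : ℕ} (G : SimpleGraph (Fin n)) (c : Fin n → Fin n → ℝ)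
    {k : ℕ} (Ω : Fin k → Matrix (Fin n) (Fin n) ℝ) : Prop :=
  (∀ m, (Ω m).IsSymm) ∧
  (∀ m i j, i ≠ j → ¬ G.Adj i j → Ω m i j = 0) ∧
  (∀ m : Fin k, ∀ x : Fin n → ℝ,
    (∀ m' : Fin k, m' < m → x ⬝ᵥ (Ω m').mulVec x = 0) → 0 ≤ x ⬝ᵥ (Ω m).mulVec x) ∧
  (∀ X, Feasible G c X → ∀ m, (Ω m * X).trace = 0) ∧
  Module.finrank ℝ (Submodule.span ℝ {x : Fin n → ℝ | ∀ m, x ⬝ᵥ (Ω m).mulVec x = 0})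
    = maxRank G c

/-- The singularity degree of `P(G, c)`: the least length of a facial reduction sequence. -/
noncomputable def sd {n : ℕ} (G : SimpleGraph (Fin n)) (c : Fin n → Fin n → ℝ) : ℕ∞ :=
  sInf {s : ℕ∞ | ∃ (k : ℕ) (Ω : Fin k → Matrix (Fin n) (Fin n) ℝ),
    IsFacialSeq G c Ω ∧ s = k}

/-- The singularity degree of a graph `G`: the largest singularity degree of `P(G, c)`
over all feasible edge weights `c`. -/
noncomputable def sdGraph {n : ℕ} (G : SimpleGraph (Fin n)) : ℕ∞ :=
  sSup {s : ℕ∞ | ∃ c : Fin n → Fin n → ℝ, (∃ X, Feasible G c X) ∧ s = sd G c}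

/-- `G` is chordal: it has no induced cycle of length at least `4`. -/
def Chordal {n : ℕ} (G : SimpleGraph (Fin n)) : Prop :=
  ∀ m : ℕ, 4 ≤ m → ∀ f : Fin m ↪ Fin n,
    ¬ (∀ i j : Fin m, G.Adj (f i) (f j) ↔ (SimpleGraph.cycleGraph m).Adj i j)


/-- the graph `G` restricted to a vertex set -/
def restrG {n : ℕ} (G : SimpleGraph (Fin n)) (W : Set (Fin n)) : SimpleGraph (Fin n) where
  Adj u v := G.Adj u v ∧ u ∈ W ∧ v ∈ W
  symm := ⟨fun _ _ h => ⟨h.1.symm, h.2.2, h.2.1⟩⟩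
  loopless := ⟨fun _ h => G.loopless.irrefl _ h.1⟩

lemma restrG_mem {n : ℕ} {G : SimpleGraph (Fin n)} {W : Set (Fin n)} {u v : Fin n}
    (h : (restrG G W).Reachable u v) (hu : u ∈ W) : v ∈ W := by
  obtain ⟨p⟩ := h
  induction p with
  | nil => exact hu
  | cons h p ih => exact ih h.2.2

lemma chordal_nbr_adj {n : ℕ} {G : SimpleGraph (Fin n)} (hG : Chordal G) {W : Set (Fin n)}
    {a x y : Fin n} (haW : ∀ z ∈ W, z ≠ a ∧ ¬ G.Adj a z) (hax : G.Adj a x) (hay : G.Adj a y)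
    (hxy : x ≠ y) (hr : (restrG G (W ∪ {x, y})).Reachable x y) : G.Adj x y := by
  by_contra hnadj
  set H := restrG G (W ∪ {x, y}) with hH
  obtain ⟨p, hp⟩ := hr.exists_walk_length_eq_dist
  set k := p.length with hk
  let f : ℕ → Fin n := fun i => p.getVert i
  have hf0 : f 0 = x := by simp [f]
  have hfk : f k = y := by simp [f, hk]
  have hreach : ∀ i, H.Reachable x (f i) := fun i => ⟨p.take i⟩
  have hreach2 : ∀ i, H.Reachable (f i) y := fun i => ⟨p.drop i⟩
  have hd : ∀ i, i ≤ k → H.dist x (f i) = i := by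
    intro i hi
    have h1 : H.dist x (f i) ≤ i := by
      refine (SimpleGraph.dist_le (p.take i)).trans ?_
      simp [SimpleGraph.Walk.take_length]
    have h2 : H.dist (f i) y ≤ k - i := by
      refine (SimpleGraph.dist_le (p.drop i)).trans ?_
      simp [SimpleGraph.Walk.drop_length, hk]
    have h3 := (hreach i).dist_triangle_left y
    omega
  have hadj : ∀ i, i < k → H.Adj (f i) (f (i+1)) := fun i hi => p.adj_getVert_succ hi
  have hmem : ∀ i, f i ∈ W ∪ {x, y} := fun i => restrG_mem (hreach i) (by simp)
  have hinj : ∀ i j, i ≤ k → j ≤ k → f i = f j → i = j := by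
    intro i j hi hj h
    rw [← hd i hi, ← hd j hj, h]
  have hadj2 : ∀ i j, i ≤ k → j ≤ k → G.Adj (f i) (f j) → i = j + 1 ∨ j = i + 1 := by
    intro i j hi hj h
    have hH' : H.Adj (f i) (f j) := ⟨h, hmem i, hmem j⟩
    have h1 := (hreach i).dist_triangle_left (f j)
    have h2 := (hreach j).dist_triangle_left (f i)
    rw [SimpleGraph.dist_eq_one_iff_adj.2 hH', hd i hi, hd j hj] at h1
    rw [SimpleGraph.dist_eq_one_iff_adj.2 hH'.symm, hd i hi, hd j hj] at h2
    have : i ≠ j := by rintro rfl; exact G.loopless.irrefl _ h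
    omega
  have hadj3 : ∀ i j, i ≤ k → j ≤ k → (G.Adj (f i) (f j) ↔ i = j + 1 ∨ j = i + 1) := by
    intro i j hi hj
    refine ⟨hadj2 i j hi hj, ?_⟩
    rintro (rfl | rfl)
    · exact (hadj j (by omega)).1.symm
    · exact (hadj i (by omega)).1
  have hk2 : 2 ≤ k := by
    by_contra hlt
    have : k = 0 ∨ k = 1 := by omega
    rcases this with h | h
    · apply hxy; rw [← hf0, ← hfk, h]
    · apply hnadj; rw [← hf0, ← hfk, h]; exact (hadj 0 (by omega)).1
  have hfa : ∀ i, f i ≠ a := by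
    intro i
    rcases hmem i with h | h
    · exact (haW _ h).1
    · rcases h with h | h
      · rw [h]; exact hax.ne'
      · rw [h]; exact hay.ne'
  have hada : ∀ i, i ≤ k → (G.Adj a (f i) ↔ i = 0 ∨ i = k) := by
    intro i hi
    constructor
    · intro h
      rcases hmem i with h' | h'
      · exact absurd h (haW _ h').2
      · rcases h' with h' | h'
        · left; exact hinj i 0 hi (by omega) (by rw [h', hf0])
        · right; exact hinj i k hi le_rfl (by rw [hfk]; exact h')
    · rintro (rfl | rfl)
      · rw [hf0]; exact hax
      · rw [hfk]; exact hay
  let g : Fin (k + 2) → Fin n := fun i => if i.val ≤ k then f i.val else a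
  have hg : Function.Injective g := by
    intro i j h
    simp only [g] at h
    have := i.2
    have := j.2
    split_ifs at h with h1 h2 h2
    · exact Fin.ext (hinj _ _ h1 h2 h)
    · exact absurd h (hfa _)
    · exact absurd h.symm (hfa _)
    · exact Fin.ext (by omega)
  refine hG (k + 2) (by omega) ⟨g, hg⟩ ?_
  intro i j
  have hi := i.2
  have hj := j.2
  have hcyc : (SimpleGraph.cycleGraph (k+2)).Adj i j ↔
      (i.val = j.val + 1 ∨ j.val = i.val + 1 ∨ (i.val = 0 ∧ j.val = k + 1) ∨
        (j.val = 0 ∧ i.val = k + 1)) := by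
    have key : ∀ u v : ℕ, u < k + 2 → v < k + 2 →
        ((k + 2 - v + u) % (k + 2) = 1 ↔ (u = v + 1 ∨ (u = 0 ∧ v = k + 1))) := by
      intro u v hu hv
      by_cases h : v ≤ u
      · have e : k + 2 - v + u = (u - v) + (k + 2) := by omega
        rw [e, Nat.add_mod_right, Nat.mod_eq_of_lt (by omega)]
        omega
      · rw [Nat.mod_eq_of_lt (by omega)]
        omega
    rw [SimpleGraph.cycleGraph_adj', Fin.sub_def, Fin.sub_def]
    simp only []
    rw [key _ _ hi hj, key _ _ hj hi]
    tauto
  rw [hcyc]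
  show G.Adj (g i) (g j) ↔ _
  simp only [g]
  split_ifs with h1 h2 h2
  · rw [hadj3 _ _ h1 h2]; omega
  · rw [G.adj_comm, hada _ h1]; omega
  · rw [hada _ h2]; omega
  · simp only [SimpleGraph.irrefl, false_iff]; omega

/-- every neighbour pair of `v` inside `S` is adjacent -/
def SimplIn {n : ℕ} (G : SimpleGraph (Fin n)) (S : Finset (Fin n)) (v : Fin n) : Prop :=
  ∀ x ∈ S, ∀ y ∈ S, G.Adj v x → G.Adj v y → x ≠ y → G.Adj x y

lemma dirac {n : ℕ} {G : SimpleGraph (Fin n)} (hG : Chordal G) (S : Finset (Fin n)) :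
    ∀ a ∈ S, ∀ b ∈ S, b ≠ a → ¬ G.Adj a b → ∃ v ∈ S, v ≠ a ∧ ¬ G.Adj a v ∧ SimplIn G S v := by
  classical
  induction S using Finset.strongInduction with
  | H S ih =>
  intro a ha b hb hba hab
  let W : Set (Fin n) := {z | z ∈ S ∧ z ≠ a ∧ ¬ G.Adj a z}
  have hbW : b ∈ W := ⟨hb, hba, hab⟩
  let B : Finset (Fin n) := S.filter fun z => (restrG G W).Reachable b z
  let T : Finset (Fin n) := S.filter fun t => G.Adj a t ∧ ∃ z ∈ B, G.Adj t z
  have hBW : ∀ z ∈ B, z ∈ W := fun z hz => restrG_mem (Finset.mem_filter.1 hz).2 hbW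
  have hbB : b ∈ B := Finset.mem_filter.2 ⟨hb, SimpleGraph.Reachable.refl _⟩
  have hTc : ∀ x ∈ T, ∀ y ∈ T, x ≠ y → G.Adj x y := by
    intro x hx y hy hxy
    obtain ⟨hxS, hax, z1, hz1, hxz1⟩ := Finset.mem_filter.1 hx
    obtain ⟨hyS, hay, z2, hz2, hyz2⟩ := Finset.mem_filter.1 hy
    refine chordal_nbr_adj hG (W := W) (fun z hz => hz.2) hax hay hxy ?_
    have hle : restrG G W ≤ restrG G (W ∪ {x, y}) :=
      fun u v h => ⟨h.1, Or.inl h.2.1, Or.inl h.2.2⟩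
    have h1 : (restrG G (W ∪ {x, y})).Adj x z1 := ⟨hxz1, by simp, Or.inl (hBW _ hz1)⟩
    have h2 : (restrG G (W ∪ {x, y})).Adj y z2 := ⟨hyz2, by simp, Or.inl (hBW _ hz2)⟩
    have r1 := (Finset.mem_filter.1 hz1).2.mono hle
    have r2 := (Finset.mem_filter.1 hz2).2.mono hle
    exact h1.reachable.trans (r1.symm.trans (r2.trans h2.reachable.symm))
  have hcl : ∀ z ∈ B, ∀ u ∈ S, G.Adj z u → u ∈ B ∪ T := by
    intro z hz u hu hzu
    have hzW := hBW z hz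
    by_cases hau : G.Adj a u
    · exact Finset.mem_union_right _ (Finset.mem_filter.2 ⟨hu, hau, z, hz, hzu.symm⟩)
    · refine Finset.mem_union_left _ (Finset.mem_filter.2 ⟨hu, ?_⟩)
      have hua : u ≠ a := by rintro rfl; exact hzW.2.2 hzu.symm
      have : (restrG G W).Adj z u := ⟨hzu, hzW, ⟨hu, hua, hau⟩⟩
      exact (Finset.mem_filter.1 hz).2.trans this.reachable
  have hsub : B ∪ T ⊂ S := by
    refine (Finset.ssubset_iff_of_subset ?_).2 ⟨a, ha, ?_⟩
    · intro z hz
      rcases Finset.mem_union.1 hz with h | h <;> exact (Finset.mem_filter.1 h).1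
    · intro h
      rcases Finset.mem_union.1 h with h | h
      · exact (hBW _ h).2.1 rfl
      · exact G.loopless.irrefl _ (Finset.mem_filter.1 h).2.1
  have hfin : ∀ v ∈ B, SimplIn G (B ∪ T) v → 
      ∃ v ∈ S, v ≠ a ∧ ¬ G.Adj a v ∧ SimplIn G S v := by
    intro v hv hs
    have hvW := hBW v hv
    exact ⟨v, hvW.1, hvW.2.1, hvW.2.2, fun x hx y hy hvx hvy hne =>
      hs x (hcl v hv x hx hvx) y (hcl v hv y hy hvy) hvx hvy hne⟩
  by_cases hT : ∃ t ∈ T, ∃ u ∈ B ∪ T, u ≠ t ∧ ¬ G.Adj t u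
  · obtain ⟨t, ht, u, hu, hut, htu⟩ := hT
    obtain ⟨v, hv, hvt, htv, hs⟩ := ih _ hsub t (Finset.mem_union_right _ ht) u hu hut htu
    rcases Finset.mem_union.1 hv with h | h
    · exact hfin v h hs
    · exact absurd (hTc t ht v h hvt.symm) htv
  · push Not at hT
    by_cases hB : ∃ t ∈ B, ∃ u ∈ B ∪ T, u ≠ t ∧ ¬ G.Adj t u
    · obtain ⟨t, ht, u, hu, hut, htu⟩ := hB
      obtain ⟨v, hv, hvt, htv, hs⟩ := ih _ hsub t (Finset.mem_union_left _ ht) u hu hut htu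
      rcases Finset.mem_union.1 hv with h | h
      · exact hfin v h hs
      · exact absurd (hT v h t (Finset.mem_union_left _ ht) hvt.symm).symm htv
    · push Not at hB
      refine hfin b hbB ?_
      intro x hx y hy _ _ hne
      rcases Finset.mem_union.1 hx with h | h
      · exact hB x h y hy hne.symm
      · exact hT x h y hy hne.symm

lemma exists_simplicial {n : ℕ} {G : SimpleGraph (Fin n)} (hG : Chordal G) (S : Finset (Fin n))
    (hS : S.Nonempty) : ∃ v ∈ S, SimplIn G S v := by
  by_cases h : ∃ a ∈ S, ∃ b ∈ S, b ≠ a ∧ ¬ G.Adj a b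
  · obtain ⟨a, ha, b, hb, hba, hab⟩ := h
    obtain ⟨v, hv, -, -, hs⟩ := dirac hG S a ha b hb hba hab
    exact ⟨v, hv, hs⟩
  · push Not at h
    obtain ⟨v, hv⟩ := hS
    exact ⟨v, hv, fun x hx y hy _ _ hne => h x hx y hy hne.symm⟩

section MatOrd
open scoped MatrixOrder ComplexOrder Matrix.Norms.L2Operator

lemma psd_factor {n : ℕ} {A : Matrix (Fin n) (Fin n) ℝ} (hA : A.PosSemidef) :
    ∃ B : Matrix (Fin n) (Fin n) ℝ, A = Bᵀ * B := by
  obtain ⟨B, hB⟩ := CStarAlgebra.nonneg_iff_eq_star_mul_self.mp hA.nonneg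
  exact ⟨B, by rw [hB, Matrix.star_eq_conjTranspose, Matrix.conjTranspose_eq_transpose_of_trivial]⟩

end MatOrd

lemma psd_mul_eq_zero {n : ℕ} {A X : Matrix (Fin n) (Fin n) ℝ} (hA : A.PosSemidef)
    (hX : X.PosSemidef) (h : (A * X).trace = 0) : A * X = 0 := by
  obtain ⟨C, rfl⟩ := psd_factor hA
  obtain ⟨B, rfl⟩ := psd_factor hX
  have h1 : C * Bᵀ = 0 := by
    rw [← Matrix.trace_conjTranspose_mul_self_eq_zero_iff, 
      Matrix.conjTranspose_eq_transpose_of_trivial, ← h]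
    rw [Matrix.transpose_mul, Matrix.transpose_transpose, Matrix.mul_assoc, Matrix.trace_mul_comm]
    simp only [Matrix.mul_assoc]
  calc Cᵀ * C * (Bᵀ * B) = Cᵀ * (C * Bᵀ) * B := by simp only [Matrix.mul_assoc]
    _ = 0 := by rw [h1]; simp

lemma exists_weights {n : ℕ} {X : Matrix (Fin n) (Fin n) ℝ} (hX : X.PosSemidef)
    (K : Finset (Fin n)) (v : Fin n) : ∃ w : Fin n → ℝ, (∀ i, i ∉ K → w i = 0) ∧
      (∀ j ∈ K, (X *ᵥ w) j = X j v) ∧ w ⬝ᵥ X *ᵥ w ≤ X v v := by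
  classical
  have hXn := hX.dotProduct_mulVec_nonneg
  have hsym : Xᵀ = X := by
    rw [← Matrix.conjTranspose_eq_transpose_of_trivial]; exact hX.1
  obtain ⟨B, hB⟩ := psd_factor hX
  let D : Matrix (Fin n) (Fin n) ℝ := Matrix.diagonal fun i => if i ∈ K then 1 else 0
  have hDT : Dᵀ = D := Matrix.diagonal_transpose _
  let M := B * D
  have hrange : LinearMap.range (Mᵀ * M).mulVecLin = LinearMap.range Mᵀ.mulVecLin := by
    apply Submodule.eq_of_le_of_finrank_eq
    · rw [Matrix.mulVecLin_mul]; exact LinearMap.range_comp_le_range _ _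
    · have := Matrix.rank_transpose_mul_self M
      rw [← Matrix.rank_transpose M] at this
      exact this
  have hmem : Mᵀ *ᵥ (B *ᵥ Pi.single v 1) ∈ LinearMap.range (Mᵀ * M).mulVecLin := by
    rw [hrange]; exact ⟨_, rfl⟩
  obtain ⟨u, hu⟩ := hmem
  have hu' : D *ᵥ (X *ᵥ (D *ᵥ u)) = D *ᵥ (X *ᵥ Pi.single v 1) := by
    rw [Matrix.mulVecLin_apply] at hu
    simp only [M, Matrix.transpose_mul, hDT] at hu
    rw [hB]
    simpa only [Matrix.mulVec_mulVec, Matrix.mul_assoc] using hu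
  have hw0 : ∀ i, i ∉ K → (D *ᵥ u) i = 0 := by
    intro i hi; simp [D, Matrix.mulVec_diagonal, hi]
  have hwK : ∀ j ∈ K, (X *ᵥ (D *ᵥ u)) j = X j v := by
    intro j hj
    have := congrFun hu' j
    simpa [D, Matrix.mulVec_diagonal, hj] using this
  refine ⟨D *ᵥ u, hw0, hwK, ?_⟩
  generalize D *ᵥ u = w at *
  have h1 : w ⬝ᵥ X *ᵥ w = w ⬝ᵥ X *ᵥ Pi.single v 1 := by
    simp only [dotProduct]
    refine Finset.sum_congr rfl fun i _ => ?_
    by_cases hi : i ∈ K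
    · rw [hwK i hi]; simp
    · rw [hw0 i hi]; simp
  have h3 : Pi.single v 1 ⬝ᵥ X *ᵥ w = w ⬝ᵥ X *ᵥ Pi.single v 1 := by
    rw [dotProduct_mulVec, ← Matrix.mulVec_transpose, hsym, dotProduct_comm]
  have h2 := hXn (Pi.single v 1 - w)
  simp only [star_trivial, Matrix.mulVec_sub, sub_dotProduct, dotProduct_sub] at h2
  rw [h3, ← h1] at h2
  have h4 : (Pi.single v 1 : Fin n → ℝ) ⬝ᵥ X *ᵥ Pi.single v 1 = X v v := by simp
  rw [h4] at h2
  linarith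

/-- The inductive claim. -/
lemma main_ind {n : ℕ} {G : SimpleGraph (Fin n)} (hG : Chordal G)
    {Y : Matrix (Fin n) (Fin n) ℝ} (hY : Y.PosSemidef) (k : ℕ) :
    ∀ S : Finset (Fin n), S.card = k → ∃ X Ω : Matrix (Fin n) (Fin n) ℝ, X.PosSemidef ∧ Ω.PosSemidef ∧
      (∀ i j, i ∉ S → X i j = 0) ∧ (∀ i j, i ∉ S → Ω i j = 0) ∧
      (∀ i ∈ S, X i i = Y i i) ∧ (∀ i ∈ S, ∀ j ∈ S, G.Adj i j → X i j = Y i j) ∧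
      (∀ i j, i ≠ j → ¬ G.Adj i j → Ω i j = 0) ∧ Ω * X = 0 ∧
      (∀ x : Fin n → ℝ, (∀ i, i ∉ S → x i = 0) → Ω *ᵥ x = 0 → ∃ y, X *ᵥ y = x) := by
  classical
  have psym : ∀ {A : Matrix (Fin n) (Fin n) ℝ}, A.PosSemidef → ∀ i j, A i j = A j i := by
    intro A hA i j
    have := congrFun (congrFun hA.1 i) j
    simpa using this.symm
  induction k with
  | zero =>
    intro S hS
    rw [Finset.card_eq_zero] at hS
    subst hS
    refine ⟨0, 0, Matrix.PosSemidef.zero, Matrix.PosSemidef.zero, ?_⟩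
    simp
    intro x hx
    funext i; exact (hx i).symm
  | succ k ih =>
    intro S hS
    obtain ⟨v, hv, hsimp⟩ := exists_simplicial hG S (Finset.card_pos.1 (by omega))
    obtain ⟨X, Ω, hX, hΩ, hX0, hΩ0, hXd, hXe, hΩe, hΩX, hker⟩ :=
      ih (S.erase v) (by rw [Finset.card_erase_of_mem hv]; omega)
    let K := (S.erase v).filter fun j => G.Adj v j
    have hK : ∀ {j}, j ∈ K ↔ (j ≠ v ∧ j ∈ S) ∧ G.Adj v j := by
      intro j; simp [K]
    obtain ⟨w, hw0, hwK, hws⟩ := exists_weights hY K v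
    have hwv : w v = 0 := hw0 v (by simp [K])
    have hXK : ∀ i ∈ K, ∀ j ∈ K, X i j = Y i j := by
      intro i hi j hj
      rw [hK] at hi hj
      by_cases hij : i = j
      · subst hij; exact hXd i (by simp [hi])
      · exact hXe i (by simp [hi]) j (by simp [hj]) 
          (hsimp i hi.1.2 j hj.1.2 hi.2 hj.2 hij)
    have hXw : ∀ j ∈ K, (X *ᵥ w) j = Y j v := by
      intro j hj
      rw [← hwK j hj]
      simp only [mulVec, dotProduct]
      refine Finset.sum_congr rfl fun i _ => ?_
      by_cases hi : i ∈ K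
      · rw [hXK j hj i hi]
      · rw [hw0 i hi]; simp
    have hwXw : w ⬝ᵥ X *ᵥ w = w ⬝ᵥ Y *ᵥ w := by
      simp only [dotProduct]
      refine Finset.sum_congr rfl fun i _ => ?_
      by_cases hi : i ∈ K
      · rw [hXw i hi, hwK i hi]
      · rw [hw0 i hi]; simp
    have hXw0 : ∀ j, j ∉ S.erase v → (X *ᵥ w) j = 0 := by
      intro j hj
      simp only [mulVec, dotProduct]
      exact Finset.sum_eq_zero fun i _ => by rw [hX0 j i hj]; simp
    have hvE : v ∉ S.erase v := by simp
    let e : Fin n → ℝ := Pi.single v 1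
    have he : ∀ i, e i = if i = v then 1 else 0 := fun i => by simp [e, Pi.single_apply]
    set s := Y v v - w ⬝ᵥ Y *ᵥ w with hs
    have hs0 : 0 ≤ s := by rw [hs]; linarith
    let t : ℝ := if s = 0 then 1 else 0
    have ht0 : 0 ≤ t := by simp only [t]; split_ifs <;> norm_num
    have hts : t * s = 0 := by simp only [t]; split_ifs with h <;> simp [h]
    let L : Matrix (Fin n) (Fin n) ℝ := 1 + vecMulVec e w
    let X' := L * X * Lᵀ + s • vecMulVec e e
    let Ω' := Ω + t • vecMulVec (e - w) (e - w)
    have hLX : L * X * Lᵀ = X + vecMulVec e (X *ᵥ w) + vecMulVec (X *ᵥ w) e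
        + (w ⬝ᵥ X *ᵥ w) • vecMulVec e e := by
      have hXT : Xᵀ = X := by
        rw [← Matrix.conjTranspose_eq_transpose_of_trivial]; exact hX.1
      have hvm : w ᵥ* X = X *ᵥ w := by rw [← Matrix.mulVec_transpose, hXT]
      simp only [L, Matrix.transpose_add, Matrix.transpose_one, Matrix.transpose_vecMulVec,
        Matrix.add_mul, Matrix.mul_add, Matrix.one_mul, Matrix.mul_one, Matrix.vecMulVec_mul, hvm,
        Matrix.mul_vecMulVec, Matrix.add_mulVec, Matrix.vecMulVec_mulVec]
      ext i j
      simp [Matrix.vecMulVec_apply, dotProduct_comm]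
      ring
    have hX'PSD : X'.PosSemidef := by
      have h1 := hX.mul_mul_conjTranspose_same L
      rw [Matrix.conjTranspose_eq_transpose_of_trivial] at h1
      have h2 := Matrix.posSemidef_vecMulVec_self_star e
      rw [star_trivial] at h2
      exact h1.add (h2.smul hs0)
    have hΩ'PSD : Ω'.PosSemidef := by
      have h2 := Matrix.posSemidef_vecMulVec_self_star (e - w)
      rw [star_trivial] at h2
      exact hΩ.add (h2.smul ht0)
    have hX'app : ∀ i j, X' i j = X i j + e i * (X *ᵥ w) j + (X *ᵥ w) i * e j
        + Y v v * (e i * e j) := by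
      intro i j
      simp only [X', hLX, Matrix.add_apply, Matrix.smul_apply, Matrix.vecMulVec_apply, smul_eq_mul,
        hwXw, hs]
      ring
    have hΩ'app : ∀ i j, Ω' i j = Ω i j + t * ((e i - w i) * (e j - w j)) := by
      intro i j
      simp [Ω', Matrix.vecMulVec_apply]
    have hXe0 : X *ᵥ e = 0 := by
      ext i; simp [e, psym hX i v, hX0 v i hvE]
    have hΩe0 : Ω *ᵥ e = 0 := by
      ext i; simp [e, psym hΩ i v, hΩ0 v i hvE]
    have hX'mul : ∀ x, X' *ᵥ x = X *ᵥ x + (w ⬝ᵥ X *ᵥ x) • e + (x v) • (X *ᵥ w) + (Y v v * x v) • e := by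
      intro x
      have hXT : Xᵀ = X := by
        rw [← Matrix.conjTranspose_eq_transpose_of_trivial]; exact hX.1
      have hc : w ⬝ᵥ X *ᵥ x = (X *ᵥ w) ⬝ᵥ x := by
        rw [dotProduct_mulVec, ← Matrix.mulVec_transpose, hXT]
      rw [hc]
      ext i
      have hev : ∀ g : Fin n → ℝ, ∑ j, e j * g j = g v := by
        intro g; simp [he]
      simp only [mulVec, dotProduct, Pi.add_apply, Pi.smul_apply, smul_eq_mul]
      simp only [hX'app]
      have : ∀ j, (X i j + e i * (X *ᵥ w) j + (X *ᵥ w) i * e j + Y v v * (e i * e j)) * x j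
        = X i j * x j + e i * ((X *ᵥ w) j * x j) + (X *ᵥ w) i * (e j * x j) + 
          Y v v * e i * (e j * x j) := fun j => by ring
      simp only [this, Finset.sum_add_distrib, ← Finset.mul_sum, hev]
      simp only [mulVec, dotProduct]
      ring
    have hΩ'mul : ∀ x, Ω' *ᵥ x = Ω *ᵥ x + (t * (x v - w ⬝ᵥ x)) • (e - w) := by
      intro x
      ext i
      simp [Ω', Matrix.add_mulVec, Matrix.smul_mulVec, Matrix.vecMulVec_mulVec, e, sub_dotProduct]
      ring
    refine ⟨X', Ω', hX'PSD, hΩ'PSD, ?_, ?_, ?_, ?_, ?_, ?_, ?_⟩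
    · intro i j hi
      have hi' : i ∉ S.erase v := fun h => hi (Finset.mem_of_mem_erase h)
      have hiv : i ≠ v := by rintro rfl; exact hi hv
      rw [hX'app, hX0 i j hi', hXw0 i hi', he i]
      simp [hiv]
    · intro i j hi
      have hi' : i ∉ S.erase v := fun h => hi (Finset.mem_of_mem_erase h)
      have hiv : i ≠ v := by rintro rfl; exact hi hv
      rw [hΩ'app, hΩ0 i j hi', he i, hw0 i (fun h => hi (hK.1 h).1.2)]
      simp [hiv]
    · intro i hi
      rw [hX'app]
      by_cases hiv : i = v
      · subst hiv
        rw [hXw0 i hvE, hX0 i i hvE, he]; simp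
      · rw [he]; simp [hiv, hXd i (Finset.mem_erase.2 ⟨hiv, hi⟩)]
    · intro i hi j hj hij
      rw [hX'app]
      by_cases hiv : i = v
      · subst hiv
        have hji : j ≠ i := hij.ne'
        rw [hX0 i j hvE, he, he, hXw j (hK.2 ⟨⟨hji, hj⟩, hij⟩), psym hY j i]
        simp [hji]
      · by_cases hjv : j = v
        · subst hjv
          rw [psym hX i j, hX0 j i hvE, he, he, hXw i (hK.2 ⟨⟨hiv, hi⟩, hij.symm⟩)]
          simp [hiv]
        · rw [he, he]
          simp [hiv, hjv]
          exact hXe i (Finset.mem_erase.2 ⟨hiv, hi⟩) j (Finset.mem_erase.2 ⟨hjv, hj⟩) hij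
    · intro i j hij hnadj
      have hz : ∀ i, i ≠ v → ¬ G.Adj v i → e i - w i = 0 := by
        intro i h1 h2
        rw [he, hw0 i (fun h => h2 (hK.1 h).2)]; simp [h1]
      have hz2 : ∀ i, e i - w i ≠ 0 → i = v ∨ (i ∈ S ∧ G.Adj v i) := by
        intro i h
        by_cases hiv : i = v
        · exact Or.inl hiv
        · right
          by_contra hcon
          apply h
          rw [he, hw0 i (fun h => hcon ⟨(hK.1 h).1.2, (hK.1 h).2⟩)]; simp [hiv]
      rw [hΩ'app, hΩe i j hij hnadj, zero_add]
      by_cases h1 : e i - w i = 0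
      · rw [h1]; simp
      by_cases h2 : e j - w j = 0
      · rw [h2]; simp
      exfalso
      apply hnadj
      rcases hz2 i h1 with h1 | h1 <;> rcases hz2 j h2 with h2 | h2
      · exact absurd (h1.trans h2.symm) hij
      · rw [h1]; exact h2.2
      · rw [h2]; exact h1.2.symm
      · exact hsimp i h1.1 j h2.1 h1.2 h2.2 hij
    · have hall : ∀ x, Ω' *ᵥ (X' *ᵥ x) = 0 := by
        intro x
        have hOX : ∀ y, Ω *ᵥ (X *ᵥ y) = 0 := by
          intro y; rw [Matrix.mulVec_mulVec, hΩX]; simp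
        have hXv : ∀ y, (X *ᵥ y) v = 0 := by
          intro y
          simp only [mulVec, dotProduct]
          exact Finset.sum_eq_zero fun i _ => by rw [hX0 v i hvE]; simp
        have hev : e v = 1 := by simp [e]
        have hwe : w ⬝ᵥ e = 0 := by simp [e, hwv]
        rw [hΩ'mul, hX'mul]
        have h1 : Ω *ᵥ (X *ᵥ x + (w ⬝ᵥ X *ᵥ x) • e + (x v) • (X *ᵥ w) + (Y v v * x v) • e) = 0 := by
          simp [Matrix.mulVec_add, Matrix.mulVec_smul, hOX, hΩe0]
        rw [h1, zero_add]
        have h2 : t * ((X *ᵥ x + (w ⬝ᵥ X *ᵥ x) • e + (x v) • (X *ᵥ w) + (Y v v * x v) • e) v - 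
          w ⬝ᵥ (X *ᵥ x + (w ⬝ᵥ X *ᵥ x) • e + (x v) • (X *ᵥ w) + (Y v v * x v) • e)) = 0 := by
          simp only [Pi.add_apply, Pi.smul_apply, smul_eq_mul, dotProduct_add, dotProduct_smul,
            hXv, hev, hwe, hwXw]
          linear_combination (x v) * hts + x v * t * (-hs)
        rw [h2, zero_smul]
      apply Matrix.ext_of_mulVec_single
      intro i
      rw [← Matrix.mulVec_mulVec, hall, Matrix.zero_mulVec]
    · intro x hx h2
      have hxe : x ⬝ᵥ e = x v := by simp [e]
      have hwe : w ⬝ᵥ e = 0 := by simp [e, hwv]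
      have hev : e v = 1 := by simp [e]
      have hΩx : Ω *ᵥ x = 0 ∧ t * (x v - w ⬝ᵥ x) = 0 := by
        have h3 : x ⬝ᵥ Ω' *ᵥ x = 0 := by rw [h2]; simp
        rw [hΩ'mul] at h3
        simp only [dotProduct_add, dotProduct_smul, dotProduct_sub, hxe, smul_eq_mul,
          dotProduct_comm x w] at h3
        have h4 : 0 ≤ x ⬝ᵥ Ω *ᵥ x := by simpa using hΩ.dotProduct_mulVec_nonneg x
        have h5 := mul_nonneg ht0 (mul_self_nonneg (x v - w ⬝ᵥ x))
        have h6 : x ⬝ᵥ Ω *ᵥ x = 0 := by linarith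
        refine ⟨(hΩ.dotProduct_mulVec_zero_iff x).1 (by simpa using h6), ?_⟩
        have h7 : t * (x v - w ⬝ᵥ x) * (x v - w ⬝ᵥ x) = 0 := by linarith
        rcases mul_eq_zero.1 h7 with h | h
        · exact h
        · rw [h]; simp
      obtain ⟨y, hy⟩ := hker (x - x v • e) (by
        intro i hi
        by_cases hiv : i = v
        · subst hiv; simp [hev]
        · have hxi := hx i (fun h => hi (Finset.mem_erase.2 ⟨hiv, h⟩))
          simp [hxi, he, hiv]) (by
        rw [Matrix.mulVec_sub, Matrix.mulVec_smul, hΩx.1, hΩe0]; simp)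
      obtain ⟨β, hβ⟩ : ∃ β, s * β = x v - w ⬝ᵥ x := by
        by_cases hs' : s = 0
        · refine ⟨0, ?_⟩
          have ht : t = 1 := by simp [t, hs']
          have := hΩx.2
          rw [ht, one_mul] at this
          rw [this, mul_zero]
        · exact ⟨(x v - w ⬝ᵥ x) / s, by field_simp⟩
      refine ⟨y + (β - y v) • e - β • w, ?_⟩
      have hXz : X *ᵥ (y + (β - y v) • e - β • w) = x - x v • e - β • (X *ᵥ w) := by
        rw [Matrix.mulVec_sub, Matrix.mulVec_add, Matrix.mulVec_smul, Matrix.mulVec_smul, hXe0, hy]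
        simp
      have hzv : (y + (β - y v) • e - β • w) v = β := by simp [hev, hwv]
      rw [hX'mul, hXz, hzv]
      simp only [dotProduct_sub, dotProduct_smul, smul_eq_mul, hwe, hwXw]
      ext i
      simp only [Pi.add_apply, Pi.sub_apply, Pi.smul_apply, smul_eq_mul]
      linear_combination (e i) * hβ - e i * β * hs

theorem chordal_singularity_degree_le_one {n : ℕ} (G : SimpleGraph (Fin n))
    (hG : Chordal G) (c : Fin n → Fin n → ℝ) (hfeas : ∃ X, Feasible G c X) :
    ∃ Ω : Matrix (Fin n) (Fin n) ℝ, Ω.PosSemidef ∧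
      (∀ i j, i ≠ j → ¬ G.Adj i j → Ω i j = 0) ∧
      (∀ X, Feasible G c X → (Ω * X).trace = 0) ∧
      Ω.rank = n - maxRank G c := by
  obtain ⟨Y, hY⟩ := hfeas
  obtain ⟨X, Ω, hX, hΩ, -, -, hXd, hXe, hΩe, hΩX, hker⟩ :=
    main_ind hG hY.1 n Finset.univ (by simp)
  have hXf : Feasible G c X := by
    refine ⟨hX, fun i => ?_, fun i j hij => ?_⟩
    · rw [hXd i (Finset.mem_univ _), hY.2.1]
    · rw [hXe i (Finset.mem_univ _) j (Finset.mem_univ _) hij, hY.2.2 i j hij]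
  have htr : ∀ Z, Feasible G c Z → (Ω * Z).trace = 0 := by
    intro Z hZ
    have h0 : (Ω * X).trace = 0 := by rw [hΩX]; simp
    rw [← h0]
    simp only [Matrix.trace, Matrix.diag_apply, Matrix.mul_apply]
    refine Finset.sum_congr rfl fun i _ => Finset.sum_congr rfl fun j _ => ?_
    by_cases hij : i = j
    · subst hij; rw [hZ.2.1, hXf.2.1]
    · by_cases hadj : G.Adj i j
      · rw [hZ.2.2 j i hadj.symm, hXf.2.2 j i hadj.symm]
      · rw [hΩe i j hij hadj]; simp
  have hle : ∀ Z, Feasible G c Z → Ω.rank + Z.rank ≤ n := by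
    intro Z hZ
    have := Matrix.rank_add_rank_le_card_of_mul_eq_zero (psd_mul_eq_zero hΩ hZ.1 (htr Z hZ))
    simpa using this
  have hge : n ≤ Ω.rank + X.rank := by
    have h1 := LinearMap.finrank_range_add_finrank_ker Ω.mulVecLin
    have h2 : LinearMap.ker Ω.mulVecLin ≤ LinearMap.range X.mulVecLin := by
      intro x hx
      obtain ⟨y, hy⟩ := hker x (by simp) (by simpa using hx)
      exact ⟨y, by simpa using hy⟩
    have h3 := Submodule.finrank_mono h2
    simp only [Module.finrank_fintype_fun_eq_card, Fintype.card_fin] at h1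
    simp only [Matrix.rank]
    omega
  have hmax : maxRank G c = X.rank := by
    refine IsGreatest.csSup_eq ⟨⟨X, hXf, rfl⟩, ?_⟩
    rintro r ⟨Z, hZ, rfl⟩
    have := hle Z hZ
    omega
  refine ⟨Ω, hΩ, hΩe, htr, ?_⟩
  have := hle X hXf
  omega
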